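/- arXiv:1410.0932 — 3 statements merged into one kernel-verified Lean document; each statement's English description precedes it below -/
import Mathlib

section
/- Let N and L be positive integers, let x : Fin N → Bool, and let i ∈ Fin N with x i = false. Let θ = π/(2L). Define the 2×2 real-rotation matrix R(θ) = [[cos θ, −sin θ],[sin θ, cos θ]] viewed as a complex matrix, define M_x as the diagonal matrix over the index set Fin 2 × Fin N whose diagonal entry at (c, j) is 1 if c = 0 or x j = false, and 0 otherwise, and let A = M_x · (R(θ) ⊗ I_N), where ⊗ is the Kronecker product and I_N is the N×N identity. Then A^L applied (by matrix–vector multiplication) to the standard basis vector e_{(0,i)} equals the standard basis vector e_{(1,i)}. -/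
/-- Zeno effect with the bomb oracle on a zero bit: if `x i = false`, then `L`
applications of `M_x ⬝ (R(θ) ⊗ I_N)` with `θ = π/(2L)` rotate the control qubit,
mapping `|0, i⟩` to `|1, i⟩`. -/
theorem bomb_rotation_on_zero_bit (N L : ℕ) (hN : 0 < N) (hL : 0 < L)
    (x : Fin N → Bool) (i : Fin N) (hx : x i = false) :
    let θ : ℝ := Real.pi / (2 * L)
    let R : Matrix (Fin 2) (Fin 2) ℂ :=
      !![(Real.cos θ : ℂ), -(Real.sin θ : ℂ); (Real.sin θ : ℂ), (Real.cos θ : ℂ)]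
    let M : Matrix (Fin 2 × Fin N) (Fin 2 × Fin N) ℂ :=
      Matrix.diagonal fun p => if p.1 = 0 ∨ x p.2 = false then 1 else 0
    let A : Matrix (Fin 2 × Fin N) (Fin 2 × Fin N) ℂ :=
      M * Matrix.kroneckerMap (· * ·) R (1 : Matrix (Fin N) (Fin N) ℂ)
    (A ^ L).mulVec (Pi.single ((0 : Fin 2), i) (1 : ℂ)) =
      Pi.single ((1 : Fin 2), i) (1 : ℂ) := by
  intro θ R M A
  have key : ∀ k : ℕ, (A ^ k).mulVec (Pi.single ((0 : Fin 2), i) (1 : ℂ)) =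
      fun p => if p.2 = i then
        (if p.1 = 0 then (Real.cos (k * θ) : ℂ) else (Real.sin (k * θ) : ℂ)) else 0 := by
    intro k
    induction k with
    | zero =>
      ext ⟨c, j⟩
      by_cases hj : j = i <;> fin_cases c <;> simp [Pi.single_apply, hj]
    | succ k ih =>
      rw [pow_succ', ← Matrix.mulVec_mulVec, ih]
      have e : ((k + 1 : ℕ) : ℝ) * θ = k * θ + θ := by push_cast; ring
      rw [e, Real.cos_add, Real.sin_add]
      ext ⟨c, j⟩
      simp only [A, M, ← Matrix.mulVec_mulVec, Matrix.mulVec_diagonal]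
      simp only [Matrix.mulVec, dotProduct, Fintype.sum_prod_type, Fin.sum_univ_two,
        Matrix.kroneckerMap_apply, Matrix.one_apply]
      by_cases hj : j = i
      · subst hj
        fin_cases c <;> simp [R, hx, Matrix.diagonal_apply] <;> ring
      · fin_cases c <;> simp [R, hj, Matrix.diagonal_apply]
  rw [key L]
  have hL' : (L : ℝ) ≠ 0 := by exact_mod_cast hL.ne'
  have e : (L : ℝ) * θ = Real.pi / 2 := by
    simp only [θ]; field_simp
  rw [e, Real.cos_pi_div_two, Real.sin_pi_div_two]
  ext ⟨c, j⟩
  by_cases hj : j = i <;> fin_cases c <;> simp [Pi.single_apply, hj]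
end

section
/- Let N and L be positive integers, let x : Fin N → Bool, and let i ∈ Fin N with x i = true. Let θ = π/(2L). Define the 2×2 real-rotation matrix R(θ) = [[cos θ, −sin θ],[sin θ, cos θ]] viewed as a complex matrix, define M_x as the diagonal matrix over the index set Fin 2 × Fin N whose diagonal entry at (c, j) is 1 if c = 0 or x j = false, and 0 otherwise, and let A = M_x · (R(θ) ⊗ I_N), where ⊗ is the Kronecker product and I_N is the N×N identity. Then A^L applied (by matrix–vector multiplication) to the standard basis vector e_{(0,i)} equals (cos θ)^L · e_{(0,i)}. -/
/-- Zeno effect with the bomb oracle on a one bit: if `x i = true`, then `L`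
applications of `M_x ⬝ (R(θ) ⊗ I_N)` with `θ = π/(2L)` keep the control qubit at
`|0⟩`, shrinking the amplitude: `|0, i⟩ ↦ (cos θ)^L |0, i⟩`. -/
theorem bomb_rotation_on_one_bit (N L : ℕ) (hN : 0 < N) (hL : 0 < L)
    (x : Fin N → Bool) (i : Fin N) (hx : x i = true) :
    let θ : ℝ := Real.pi / (2 * L)
    let R : Matrix (Fin 2) (Fin 2) ℂ :=
      !![(Real.cos θ : ℂ), -(Real.sin θ : ℂ); (Real.sin θ : ℂ), (Real.cos θ : ℂ)]
    let M : Matrix (Fin 2 × Fin N) (Fin 2 × Fin N) ℂ :=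
      Matrix.diagonal fun p => if p.1 = 0 ∨ x p.2 = false then 1 else 0
    let A : Matrix (Fin 2 × Fin N) (Fin 2 × Fin N) ℂ :=
      M * Matrix.kroneckerMap (· * ·) R (1 : Matrix (Fin N) (Fin N) ℂ)
    (A ^ L).mulVec (Pi.single ((0 : Fin 2), i) (1 : ℂ)) =
      ((Real.cos θ : ℂ) ^ L) •
        (Pi.single ((0 : Fin 2), i) (1 : ℂ) : Fin 2 × Fin N → ℂ) := by
  intro θ R M A
  have key : A.mulVec (Pi.single ((0 : Fin 2), i) (1 : ℂ)) =
      (Real.cos θ : ℂ) • (Pi.single ((0 : Fin 2), i) (1 : ℂ) : Fin 2 × Fin N → ℂ) := by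
    rw [Matrix.mulVec_single_one]
    funext p
    obtain ⟨c, j⟩ := p
    simp only [A, M, R, Matrix.col_apply, Matrix.diagonal_mul, Matrix.kroneckerMap_apply,
      Pi.smul_apply, smul_eq_mul, Pi.single_apply, Prod.mk.injEq, Matrix.one_apply]
    by_cases hj : j = i
    · subst hj
      fin_cases c <;> simp [hx]
    · simp [hj]
  have gen : ∀ n : ℕ, (A ^ n).mulVec (Pi.single ((0 : Fin 2), i) (1 : ℂ)) =
      ((Real.cos θ : ℂ) ^ n) •
        (Pi.single ((0 : Fin 2), i) (1 : ℂ) : Fin 2 × Fin N → ℂ) := by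
    intro n
    induction n with
    | zero => rw [pow_zero, pow_zero, Matrix.one_mulVec, one_smul]
    | succ n ih =>
      rw [pow_succ, ← Matrix.mulVec_mulVec, key, Matrix.mulVec_smul, ih, smul_smul, pow_succ,
        mul_comm]
  exact gen L
end

section
/- Let N and d be positive integers, let S be a finite set of strings x : Fin N → Bool, let a : S → ℂ satisfy ∑_{x ∈ S} |a_x|² = 1, and for each x ∈ S let ψ_x ∈ ℂ^{(Fin 2 × Fin N) × Fin d} be a vector with ‖ψ_x‖ ≤ 1. For x ∈ S let M_x be the diagonal matrix over the index set (Fin 2 × Fin N) × Fin d whose diagonal entry at ((c, j), w) is 1 if c = 0 or x j = false, and 0 otherwise, and set ε_x = ‖ψ_x‖² − ‖M_x ψ_x‖². Let Γ be an S × S complex matrix, and for each i ∈ Fin N let Γ_i be the S × S matrix with (Γ_i)_{xy} = Γ_{xy} if x i ≠ y i and (Γ_i)_{xy} = 0 if x i = y i. Then |∑_{x,y ∈ S} Γ_{xy} · conj(a_x) · a_y · (⟨ψ_x, ψ_y⟩ − ⟨M_x ψ_x, M_y ψ_y⟩)| ≤ 2 · sqrt(∑_{x ∈ S} |a_x|²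 ε_x) · max_{i ∈ Fin N} ‖Γ_i‖ + (∑_{x ∈ S} |a_x|² ε_x) · ‖Γ‖, where ‖·‖ denotes the spectral norm of a matrix. -/
open scoped InnerProductSpace

lemma aps_inner {n : Type*} [Fintype n] [DecidableEq n] (A : Matrix n n ℂ)
    (u v : EuclideanSpace ℂ n) :
    ⟪u, Matrix.toEuclideanCLM (𝕜 := ℂ) A v⟫_ℂ =
      ∑ x, ∑ y, A x y * (starRingEnd ℂ) (u x) * v y := by
  rw [PiLp.inner_apply]
  refine Finset.sum_congr rfl fun x _ => ?_
  simp only [Matrix.ofLp_toEuclideanCLM, Matrix.mulVec, dotProduct, RCLike.inner_apply,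
    Finset.sum_mul]
  exact Finset.sum_congr rfl fun y _ => by ring

lemma aps_bound {n : Type*} [Fintype n] [DecidableEq n] (A : Matrix n n ℂ)
    (u v : EuclideanSpace ℂ n) :
    ‖⟪u, Matrix.toEuclideanCLM (𝕜 := ℂ) A v⟫_ℂ‖ ≤
      ‖Matrix.toEuclideanCLM (𝕜 := ℂ) A‖ * (‖u‖ * ‖v‖) := by
  calc _ ≤ ‖u‖ * ‖Matrix.toEuclideanCLM (𝕜 := ℂ) A v‖ := norm_inner_le_norm _ _
    _ ≤ ‖u‖ * (‖Matrix.toEuclideanCLM (𝕜 := ℂ) A‖ * ‖v‖) := by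
        gcongr; exact ContinuousLinearMap.le_opNorm _ _
    _ = _ := by ring

/-- Bound on the change of the adversary progress function caused by a single bomb
query: `|∑_{x,y∈S} Γ_{xy} a_x* a_y (⟨ψ_x, ψ_y⟩ - ⟨M_x ψ_x, M_y ψ_y⟩)|
  ≤ 2 √(∑_x |a_x|² ε_x) max_i ‖Γ_i‖ + (∑_x |a_x|² ε_x) ‖Γ‖`. -/
theorem adversary_progress_step (N d : ℕ) (hN : 0 < N) (hd : 0 < d)
    (S : Finset (Fin N → Bool))
    (a : (Fin N → Bool) → ℂ) (ha : ∑ x ∈ S, ‖a x‖ ^ 2 = 1)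
    (ψ : (Fin N → Bool) → EuclideanSpace ℂ ((Fin 2 × Fin N) × Fin d))
    (hψ : ∀ x ∈ S, ‖ψ x‖ ≤ 1)
    (Γ : Matrix ↥S ↥S ℂ) :
    let M : (Fin N → Bool) →
        Matrix ((Fin 2 × Fin N) × Fin d) ((Fin 2 × Fin N) × Fin d) ℂ :=
      fun x => Matrix.diagonal fun p => if p.1.1 = 0 ∨ x p.1.2 = false then 1 else 0
    let Mψ : (Fin N → Bool) → EuclideanSpace ℂ ((Fin 2 × Fin N) × Fin d) :=
      fun x => Matrix.toEuclideanLin (M x) (ψ x)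
    let ε : (Fin N → Bool) → ℝ := fun x => ‖ψ x‖ ^ 2 - ‖Mψ x‖ ^ 2
    let Γi : Fin N → Matrix ↥S ↥S ℂ := fun i =>
      Matrix.of fun x y =>
        if (x : Fin N → Bool) i ≠ (y : Fin N → Bool) i then Γ x y else 0
    ‖∑ x : ↥S, ∑ y : ↥S, Γ x y * (starRingEnd ℂ) (a x) * a y *
        (⟪ψ x, ψ y⟫_ℂ - ⟪Mψ x, Mψ y⟫_ℂ)‖ ≤
      2 * Real.sqrt (∑ x : ↥S, ‖a x‖ ^ 2 * ε x) *
          (⨆ i : Fin N, ‖Matrix.toEuclideanCLM (𝕜 := ℂ) (Γi i)‖) +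
        (∑ x : ↥S, ‖a x‖ ^ 2 * ε x) * ‖Matrix.toEuclideanCLM (𝕜 := ℂ) Γ‖ := by
  intro M Mψ ε Γi
  have hM : ∀ x p, Mψ x p = if p.1.1 = 0 ∨ x p.1.2 = false then ψ x p else 0 := by
    intro x p
    simp only [Mψ, M, Matrix.ofLp_toLpLin, Matrix.toLin'_apply, Matrix.mulVec_diagonal]
    split_ifs <;> simp
  let U : (Fin 2 × Fin N) × Fin d → EuclideanSpace ℂ ↥S :=
    fun p => WithLp.toLp 2 fun x => a x * ψ x p
  let V : (Fin 2 × Fin N) × Fin d → EuclideanSpace ℂ ↥S :=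
    fun p => WithLp.toLp 2 fun x =>
      if p.1.1 = 0 ∨ (x : Fin N → Bool) p.1.2 = false then 0 else a x * ψ x p
  have hU : ∀ p x, U p x = a x * ψ x p := fun _ _ => rfl
  have hV : ∀ p (x : ↥S), V p x =
      if p.1.1 = 0 ∨ (x : Fin N → Bool) p.1.2 = false then 0 else a x * ψ x p :=
    fun _ _ => rfl
  have key : ∑ x : ↥S, ∑ y : ↥S, Γ x y * (starRingEnd ℂ) (a x) * a y *
        (⟪ψ x, ψ y⟫_ℂ - ⟪Mψ x, Mψ y⟫_ℂ) =
      ∑ p, (⟪V p, Matrix.toEuclideanCLM (𝕜 := ℂ) Γ (V p)⟫_ℂ +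
        ⟪V p, Matrix.toEuclideanCLM (𝕜 := ℂ) (Γi p.1.2) (U p)⟫_ℂ +
        ⟪U p, Matrix.toEuclideanCLM (𝕜 := ℂ) (Γi p.1.2) (V p)⟫_ℂ) := by
    simp only [aps_inner, ← Finset.sum_add_distrib]
    rw [Finset.sum_comm]
    conv_rhs => rw [Finset.sum_comm]
    rw [Finset.sum_comm]
    refine Finset.sum_congr rfl fun x _ => ?_
    rw [Finset.sum_comm]
    refine Finset.sum_congr rfl fun y _ => ?_
    rw [PiLp.inner_apply, PiLp.inner_apply, ← Finset.sum_sub_distrib, Finset.mul_sum]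
    refine Finset.sum_congr rfl fun p _ => ?_
    simp only [RCLike.inner_apply, hM, hU, hV, Γi, Matrix.of_apply]
    by_cases hc : p.1.1 = 0
    · simp [hc]
    · cases hx : (x : Fin N → Bool) p.1.2 <;> cases hy : (y : Fin N → Bool) p.1.2 <;>
        simp [hc] <;> ring
  have hE : ∑ p, ‖V p‖ ^ 2 = ∑ x : ↥S, ‖a x‖ ^ 2 * ε x := by
    simp only [EuclideanSpace.norm_sq_eq, ε]
    rw [Finset.sum_comm]
    refine Finset.sum_congr rfl fun x _ => ?_
    rw [← Finset.sum_sub_distrib, Finset.mul_sum]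
    refine Finset.sum_congr rfl fun p _ => ?_
    rw [hM, hV]
    split_ifs <;> simp [mul_pow]
  have h1 : ∑ p, ‖U p‖ ^ 2 ≤ 1 := by
    have : ∑ p, ‖U p‖ ^ 2 = ∑ x : ↥S, ‖a x‖ ^ 2 * ‖ψ x‖ ^ 2 := by
      simp only [EuclideanSpace.norm_sq_eq]
      rw [Finset.sum_comm]
      refine Finset.sum_congr rfl fun x _ => ?_
      rw [Finset.mul_sum]
      refine Finset.sum_congr rfl fun p _ => ?_
      rw [hU, norm_mul, mul_pow]
    rw [this, ← ha, ← Finset.sum_coe_sort S]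
    refine Finset.sum_le_sum fun x _ => ?_
    exact mul_le_of_le_one_right (by positivity)
      (pow_le_one₀ (norm_nonneg _) (hψ x x.2))
  rw [key, ← hE]
  set G := ⨆ i : Fin N, ‖Matrix.toEuclideanCLM (𝕜 := ℂ) (Γi i)‖ with hG
  have hGi : ∀ i, ‖Matrix.toEuclideanCLM (𝕜 := ℂ) (Γi i)‖ ≤ G := fun i =>
    le_ciSup (f := fun i => ‖Matrix.toEuclideanCLM (𝕜 := ℂ) (Γi i)‖)
      (Set.finite_range _).bddAbove i
  have hG0 : 0 ≤ G := Real.iSup_nonneg fun i => norm_nonneg _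
  have hCS : ∑ p, ‖V p‖ * ‖U p‖ ≤ Real.sqrt (∑ p, ‖V p‖ ^ 2) := by
    refine (Real.sum_mul_le_sqrt_mul_sqrt _ _ _).trans ?_
    exact mul_le_of_le_one_right (Real.sqrt_nonneg _) (Real.sqrt_le_one.mpr h1)
  calc _ ≤ ∑ p, (‖Matrix.toEuclideanCLM (𝕜 := ℂ) Γ‖ * ‖V p‖ ^ 2 +
        2 * G * (‖V p‖ * ‖U p‖)) := by
        refine norm_sum_le_of_le _ fun p _ => ?_
        refine (norm_add₃_le).trans ?_
        have e1 := aps_bound Γ (V p) (V p)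
        have e2 := (aps_bound (Γi p.1.2) (V p) (U p)).trans
          (mul_le_mul_of_nonneg_right (hGi p.1.2) (by positivity))
        have e3 := (aps_bound (Γi p.1.2) (U p) (V p)).trans
          (mul_le_mul_of_nonneg_right (hGi p.1.2) (by positivity))
        nlinarith
    _ = ‖Matrix.toEuclideanCLM (𝕜 := ℂ) Γ‖ * ∑ p, ‖V p‖ ^ 2 +
        2 * G * ∑ p, ‖V p‖ * ‖U p‖ := by
        rw [Finset.sum_add_distrib, Finset.mul_sum, Finset.mul_sum]
    _ ≤ ‖Matrix.toEuclideanCLM (𝕜 := ℂ) Γ‖ * ∑ p, ‖V p‖ ^ 2 +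
        2 * G * Real.sqrt (∑ p, ‖V p‖ ^ 2) := by gcongr
    _ = _ := by ring
end
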